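/- Let A be an affine hyperplane arrangement in K^d over a field K, and let cA be the cone over A in K^{d+1}, with additional hyperplane K : y = 0. Then the map X ↦ {H ∈ A : cH ≤ X} is a bijection between the set of modular elements X of L(cA) satisfying K ≤ X and the set of modular subarrangements of A. -/

import Mathlib

open Polynomial
open scoped Classical Pointwise

namespace HypArr

variable {K V : Type*} [Field K] [AddCommGroup V] [Module K V] [FiniteDimensional K V]

/-- `A` is an affine hyperplane arrangement: a finite set of affine hyperplanes,
i.e. nonempty affine subspaces of codimension one. -/
def IsArrangement (A : Finset (AffineSubspace K V)) : Prop :=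
  ∀ H ∈ A, H ≠ ⊥ ∧ Module.finrank K V = Module.finrank K H.direction + 1

/-- The intersection poset `L(A)`: all nonempty intersections of subfamilies of `A`
(the empty intersection being the whole space `⊤`).  The order of `L(A)` is *reverse*
inclusion, so `X ≤ Y` in `L(A)` corresponds to `Y ≤ X` as affine subspaces; the
minimal element `0̂` of `L(A)` is the whole space `⊤`. -/
noncomputable def poset (A : Finset (AffineSubspace K V)) : Finset (AffineSubspace K V) :=
  (A.powerset.image fun S => S.inf id).filter (· ≠ ⊥)

/-- The rank of an element of `L(A)`: its codimension in `V`. -/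
noncomputable def rk (X : AffineSubspace K V) : ℕ :=
  Module.finrank K V - Module.finrank K X.direction

/-- The rank `r(A)` of the arrangement: the maximal rank of an element of `L(A)`. -/
noncomputable def rank (A : Finset (AffineSubspace K V)) : ℕ := (poset A).sup rk

/-- An ideal of `L(A)` (with respect to the reverse-inclusion order of `L(A)`):
a downward closed subset of `L(A)`. -/
def IsIdeal (A I : Finset (AffineSubspace K V)) : Prop :=
  I ⊆ poset A ∧ ∀ X ∈ I, ∀ Y ∈ poset A, X ≤ Y → Y ∈ I

/-- The principal ideal `⟨X⟩ = {Y ∈ L(A) : Y ≤ X}` of `L(A)` (in the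
reverse-inclusion order of `L(A)`, i.e. `{Y ∈ L(A) : X ⊆ Y}`). -/
noncomputable def principal (A : Finset (AffineSubspace K V)) (X : AffineSubspace K V) :
    Finset (AffineSubspace K V) :=
  (poset A).filter fun Y => X ≤ Y

/-- The meet `X ∧ Y` in `L(A)`: the greatest element of `L(A)` below both `X` and `Y`
(in the reverse-inclusion order); in terms of affine subspaces it is the smallest
element of `L(A)` containing both `X` and `Y`.  In particular `X ∧ Y = 0̂` iff
`lmeet A X Y = ⊤`. -/
noncomputable def lmeet (A : Finset (AffineSubspace K V)) (X Y : AffineSubspace K V) :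
    AffineSubspace K V :=
  sInf {W | W ∈ poset A ∧ X ≤ W ∧ Y ≤ W}

/-- An ideal decomposition `{I_1, …, I_m}` of `L(A)`:
(I1) for every `X ∈ L(A) \ {0̂}` some `I j ∩ ⟨X⟩` is a nontrivial principal ideal;
(I2) joins `X_1 ∨ ⋯ ∨ X_m` (i.e. intersections) of members of the ideals exist;
(I3) these joins satisfy the rank condition. -/
def IsIdealDecomposition (A : Finset (AffineSubspace K V)) {m : ℕ}
    (I : Fin m → Finset (AffineSubspace K V)) : Prop :=
  (∀ i, IsIdeal A (I i)) ∧
  (∀ X ∈ poset A, X ≠ ⊤ →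
    ∃ j, ∃ Z ∈ poset A, Z ≠ ⊤ ∧ I j ∩ principal A X = principal A Z) ∧
  (∀ f : Fin m → AffineSubspace K V, (∀ i, f i ∈ I i) →
    Finset.univ.inf f ≠ (⊥ : AffineSubspace K V)) ∧
  (∀ f : Fin m → AffineSubspace K V, (∀ i, f i ∈ I i) →
    rk (Finset.univ.inf f) = ∑ i, rk (f i))

/-- The meet-complement `I^c = {Y ∈ L(A) : Y ∧ X = 0̂ for all X ∈ I}`. -/
noncomputable def meetCompl (A I : Finset (AffineSubspace K V)) : Finset (AffineSubspace K V) :=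
  (poset A).filter fun Y => ∀ X ∈ I, lmeet A X Y = ⊤

/-- An ideal `I` is modular if `{I, I^c}` is an ideal decomposition of `L(A)`. -/
def IsModularIdeal (A I : Finset (AffineSubspace K V)) : Prop :=
  IsIdealDecomposition A ![I, meetCompl A I]

/-- `μ` is the Möbius function `μ(0̂, ·)` of the finite intersection poset `P`
(ordered by reverse inclusion, with minimal element the maximal affine subspace in `P`):
the sum of `μ` over an interval `[0̂, X]` is `1` if `X = 0̂` and `0` otherwise. -/
def IsMobiusOn (P : Finset (AffineSubspace K V)) (μ : AffineSubspace K V → ℤ) : Prop :=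
  ∀ X ∈ P, ∑ Z ∈ P.filter (fun Z => X ≤ Z), μ Z = if ∀ Z ∈ P, Z ≤ X then 1 else 0

/-- The characteristic polynomial `χ(t) = ∑_{X ∈ P} μ(X) t^{dim X}` of an
intersection poset `P` with Möbius function `μ`. -/
noncomputable def charPolyOn (P : Finset (AffineSubspace K V)) (μ : AffineSubspace K V → ℤ) :
    Polynomial ℤ :=
  ∑ X ∈ P, C (μ X) * Polynomial.X ^ (Module.finrank K X.direction)

/-- The characteristic polynomial `χ̃(I, t) = ∑_{X ∈ I} μ(X) t^{r(I) - r(X)}` of an ideal. -/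
noncomputable def tildeChi (μ : AffineSubspace K V → ℤ) (I : Finset (AffineSubspace K V)) :
    Polynomial ℤ :=
  ∑ X ∈ I, C (μ X) * Polynomial.X ^ (I.sup rk - rk X)

/-- A central arrangement: the intersection of all hyperplanes is nonempty. -/
def IsCentral (A : Finset (AffineSubspace K V)) : Prop := A.inf id ≠ ⊥

/-- A modular element `Z ∈ L(A)`: `r(Z) + r(X) = r(Z ∧ X) + r(Z ∨ X)` for all `X ∈ L(A)`
(the join `Z ∨ X` being the intersection `Z ⊓ X` of affine subspaces). -/
def IsModularElement (A : Finset (AffineSubspace K V)) (Z : AffineSubspace K V) : Prop :=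
  Z ∈ poset A ∧ ∀ X ∈ poset A, rk Z + rk X = rk (lmeet A Z X) + rk (Z ⊓ X)

/-- The intersection poset of the restriction `B^W = {H ∩ W : H ∈ B, H ∩ W ≠ ∅}`
of the arrangement `B` to the affine subspace `W`, realized as a finset of affine
subspaces of the ambient space (with minimal element `W`). -/
noncomputable def tracePoset (B : Finset (AffineSubspace K V)) (W : AffineSubspace K V) :
    Finset (AffineSubspace K V) :=
  (((B.filter fun H => H ⊓ W ≠ ⊥).image fun H => H ⊓ W).powerset.image
      fun S => W ⊓ S.inf id).filter (· ≠ ⊥)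

/-- A modular subarrangement `B ⊆ A`: `L(B)`, viewed as a subposet of `L(A)`,
is a modular ideal of `L(A)`. -/
def IsModularSub (A B : Finset (AffineSubspace K V)) : Prop :=
  B ⊆ A ∧ IsModularIdeal A (poset B)

end HypArr

namespace HypArr

variable {K V : Type*} [Field K] [AddCommGroup V] [Module K V] [FiniteDimensional K V]

/-- The cone `cH` over an affine hyperplane `H ⊆ V`: the linear hyperplane of `V × K`
spanned by `H × {1}` (for `H : α·x = a` this is the hyperplane `α·x = a·y`). -/
noncomputable def cone (H : AffineSubspace K V) : AffineSubspace K (V × K) :=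
  (Submodule.span K ((fun x => (x, (1 : K))) '' (H : Set V))).toAffineSubspace

/-- The additional hyperplane `K : y = 0` of the cone construction. -/
noncomputable def addHyp (K V : Type*) [Field K] [AddCommGroup V] [Module K V] :
    AffineSubspace K (V × K) :=
  (LinearMap.ker (LinearMap.snd K V K)).toAffineSubspace

/-- The cone `cA` over the affine arrangement `A`: the linear arrangement in `V × K`
consisting of the cones `cH` for `H ∈ A` together with the additional hyperplane. -/
noncomputable def coneArr (A : Finset (AffineSubspace K V)) :
    Finset (AffineSubspace K (V × K)) :=
  insert (addHyp K V) (A.image cone)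

end HypArr

/-!
Every linear subspace of `V × K` is either `D × 0` with `D` a linear subspace of `V`, or the cone
over an affine subspace of `V`. Hence the elements of `L(cA)` above the additional hyperplane are
the subspaces `D × 0` where `D` is the direction of a flat of `A`, and the map of the theorem
sends `D × 0` to the set of hyperplanes of `A` whose direction contains `D`. Its inverse sends `B`
to the intersection `D` of the directions of its members.

In a central arrangement, `Z` is modular iff its sum with every flat is again a flat. As the sum
of `D × 0` and the cone over `Y` is the cone over `Y + D`, the subspace `D × 0` is modular iff
`Y + D` is a flat of `A` for every flat `Y`. On the other side, the join and rank axioms for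
`{L(B), L(B)ᶜ}` say that `Y + D` is the whole space for every flat `Y` that lies in no hyperplane
of `B`. An arbitrary flat is the intersection of such a flat `Y` with a flat `Z` of `B`, and
`(Y ⊓ Z) + D = (Y + D) ⊓ Z`, so the two conditions agree.
-/

namespace HypArr

section Affine

variable {K V : Type*} [Field K] [AddCommGroup V] [Module K V]
  {Y Z W : AffineSubspace K V} {D : Submodule K V} {p x : V}

theorem le_iff_direction_le_of_mem (hY : p ∈ Y) (hZ : p ∈ Z) :
    Y ≤ Z ↔ Y.direction ≤ Z.direction := by
  rw [← AffineSubspace.mk'_le_mk'_iff p, AffineSubspace.mk'_eq hY, AffineSubspace.mk'_eq hZ]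

theorem exists_mem_of_ne_bot (hY : Y ≠ ⊥) : ∃ p, p ∈ Y :=
  (AffineSubspace.nonempty_iff_ne_bot Y).2 hY

theorem ne_bot_of_mem (hp : p ∈ Y) : Y ≠ ⊥ :=
  (AffineSubspace.nonempty_iff_ne_bot Y).1 ⟨p, hp⟩

theorem direction_eq_top_iff (hY : Y ≠ ⊥) : Y.direction = ⊤ ↔ Y = ⊤ :=
  AffineSubspace.direction_eq_top_iff_of_nonempty ((AffineSubspace.nonempty_iff_ne_bot Y).2 hY)

theorem toAffineSubspace_sup (E F : Submodule K V) :
    (E ⊔ F).toAffineSubspace = E.toAffineSubspace ⊔ F.toAffineSubspace := by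
  have hE : (0 : V) ∈ E.toAffineSubspace := E.zero_mem
  have hF : (0 : V) ∈ F.toAffineSubspace := F.zero_mem
  have hsup : (0 : V) ∈ (E ⊔ F).toAffineSubspace := (E ⊔ F).zero_mem
  rw [AffineSubspace.eq_iff_direction_eq_of_mem hsup
      ((le_sup_left : E.toAffineSubspace ≤ E.toAffineSubspace ⊔ F.toAffineSubspace) hE),
    AffineSubspace.direction_sup_eq_sup_direction hE hF]
  simp only [Submodule.toAffineSubspace_direction]

/-- The union `Y + D` of all translates of `Y` by vectors of `D`, encoded as the saturation of `Y`
under the projection `V → V ⧸ D`. It turns the sum of `D × 0` and the cone over `Y` into a cone. -/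
def thicken (Y : AffineSubspace K V) (D : Submodule K V) : AffineSubspace K V :=
  (Y.map D.mkQ.toAffineMap).comap D.mkQ.toAffineMap

theorem mem_thicken : x ∈ thicken Y D ↔ ∃ y ∈ Y, x - y ∈ D := by
  simp only [thicken, AffineSubspace.mem_comap, AffineSubspace.mem_map,
    LinearMap.coe_toAffineMap, Submodule.mkQ_apply, Submodule.Quotient.eq, sub_mem_comm_iff]

theorem le_thicken : Y ≤ thicken Y D :=
  fun y hy => mem_thicken.2 ⟨y, hy, by simp⟩

theorem thicken_ne_bot (hY : Y ≠ ⊥) : thicken Y D ≠ ⊥ :=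
  ne_bot_of_le_ne_bot hY le_thicken

theorem thicken_le_iff (hY : Y ≠ ⊥) : thicken Y D ≤ W ↔ Y ≤ W ∧ D ≤ W.direction := by
  obtain ⟨p, hp⟩ := exists_mem_of_ne_bot hY
  refine ⟨fun h => ⟨le_thicken.trans h, fun d hd => ?_⟩, ?_⟩
  · rw [← AffineSubspace.vadd_mem_iff_mem_direction d (h (le_thicken hp))]
    exact h (mem_thicken.2 ⟨p, hp, by simpa using hd⟩)
  · rintro ⟨hYW, hDW⟩ x hx
    obtain ⟨y, hy, hxy⟩ := mem_thicken.1 hx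
    exact (AffineSubspace.vsub_right_mem_direction_iff_mem (hYW hy) x).1 (hDW hxy)

theorem direction_thicken (hY : Y ≠ ⊥) : (thicken Y D).direction = Y.direction ⊔ D := by
  obtain ⟨p, hp⟩ := exists_mem_of_ne_bot hY
  refine le_antisymm ?_ (sup_le (AffineSubspace.direction_le le_thicken)
    ((thicken_le_iff hY).1 le_rfl).2)
  rw [← AffineSubspace.direction_mk' p (Y.direction ⊔ D)]
  refine AffineSubspace.direction_le ((thicken_le_iff hY).2 ⟨?_, ?_⟩)
  · rw [le_iff_direction_le_of_mem hp (AffineSubspace.self_mem_mk' _ _),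
      AffineSubspace.direction_mk']
    exact le_sup_left
  · rw [AffineSubspace.direction_mk']
    exact le_sup_right

theorem thicken_eq_top_iff (hY : Y ≠ ⊥) : thicken Y D = ⊤ ↔ Y.direction ⊔ D = ⊤ := by
  rw [← direction_eq_top_iff (thicken_ne_bot hY), direction_thicken hY]

theorem thicken_inf_of_le_direction (hD : D ≤ Z.direction) :
    thicken (Y ⊓ Z) D = thicken Y D ⊓ Z := by
  ext x
  simp only [AffineSubspace.mem_inf_iff, mem_thicken]
  constructor
  · rintro ⟨y, ⟨hyY, hyZ⟩, hxy⟩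
    exact ⟨⟨y, hyY, hxy⟩, (AffineSubspace.vsub_right_mem_direction_iff_mem hyZ x).1 (hD hxy)⟩
  · rintro ⟨⟨y, hyY, hxy⟩, hxZ⟩
    exact ⟨y, ⟨hyY, (AffineSubspace.vsub_left_mem_direction_iff_mem hxZ y).1 (hD hxy)⟩, hxy⟩

end Affine

section Rank

variable {K V : Type*} [Field K] [AddCommGroup V] [Module K V] [FiniteDimensional K V]
  {Y Z : AffineSubspace K V} {p : V}

theorem rk_add_finrank_direction (Y : AffineSubspace K V) :
    rk Y + Module.finrank K Y.direction = Module.finrank K V :=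
  Nat.sub_add_cancel Y.direction.finrank_le

theorem rk_add_rk_eq_rk_sup_add_rk_inf (hY : p ∈ Y) (hZ : p ∈ Z) :
    rk Y + rk Z = rk (Y ⊔ Z) + rk (Y ⊓ Z) := by
  have hdim := Submodule.finrank_sup_add_finrank_inf_eq Y.direction Z.direction
  rw [← AffineSubspace.direction_inf_of_mem hY hZ,
    ← AffineSubspace.direction_sup_eq_sup_direction hY hZ] at hdim
  have := rk_add_finrank_direction Y
  have := rk_add_finrank_direction Z
  have := rk_add_finrank_direction (Y ⊔ Z)
  have := rk_add_finrank_direction (Y ⊓ Z)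
  omega

theorem rk_eq_zero_iff : rk Y = 0 ↔ Y.direction = ⊤ := by
  have := rk_add_finrank_direction Y
  refine ⟨fun h => Submodule.eq_top_of_finrank_eq (by omega), fun h => ?_⟩
  rw [rk, h, finrank_top, Nat.sub_self]

theorem eq_of_le_of_rk_eq (hY : Y ≠ ⊥) (hle : Y ≤ Z) (hrk : rk Y = rk Z) : Y = Z := by
  have := rk_add_finrank_direction Y
  have := rk_add_finrank_direction Z
  exact AffineSubspace.eq_of_direction_eq_of_nonempty_of_le
    (Submodule.eq_of_le_of_finrank_eq (AffineSubspace.direction_le hle) (by omega))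
    ((AffineSubspace.nonempty_iff_ne_bot Y).2 hY) hle

theorem inf_ne_bot_and_rk_inf_eq_iff (hY : Y ≠ ⊥) (hZ : Z ≠ ⊥) :
    Y ⊓ Z ≠ ⊥ ∧ rk (Y ⊓ Z) = rk Y + rk Z ↔ Y.direction ⊔ Z.direction = ⊤ := by
  have hrk_iff : ∀ p ∈ Y ⊓ Z, rk (Y ⊓ Z) = rk Y + rk Z ↔ Y.direction ⊔ Z.direction = ⊤ := by
    rintro p ⟨hpY, hpZ⟩
    rw [rk_add_rk_eq_rk_sup_add_rk_inf hpY hpZ, right_eq_add, rk_eq_zero_iff,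
      AffineSubspace.direction_sup_eq_sup_direction hpY hpZ]
  constructor
  · rintro ⟨hne, hrk⟩
    obtain ⟨p, hp⟩ := exists_mem_of_ne_bot hne
    exact (hrk_iff p hp).1 hrk
  · intro htop
    obtain ⟨p, hp⟩ := AffineSubspace.inter_nonempty_of_nonempty_of_sup_direction_eq_top
      ((AffineSubspace.nonempty_iff_ne_bot Y).2 hY) ((AffineSubspace.nonempty_iff_ne_bot Z).2 hZ)
      htop
    exact ⟨ne_bot_of_mem hp, (hrk_iff p hp).2 htop⟩

end Rank

section Flats

variable {K V : Type*} [Field K] [AddCommGroup V] [Module K V]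
  {A B I : Finset (AffineSubspace K V)} {H Y Z W : AffineSubspace K V} {D : Submodule K V}

theorem mem_poset_iff_exists : Y ∈ poset A ↔ Y ≠ ⊥ ∧ ∃ S ⊆ A, S.inf id = Y := by
  simp only [poset, Finset.mem_filter, Finset.mem_image, Finset.mem_powerset, and_comm]

theorem ne_bot_of_mem_poset (hY : Y ∈ poset A) : Y ≠ ⊥ :=
  (mem_poset_iff_exists.1 hY).1

theorem top_mem_poset : (⊤ : AffineSubspace K V) ∈ poset A :=
  mem_poset_iff_exists.2 ⟨top_ne_bot, ∅, A.empty_subset, Finset.inf_empty⟩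

theorem mem_poset_of_mem (hH : H ∈ A) (hne : H ≠ ⊥) : H ∈ poset A :=
  mem_poset_iff_exists.2 ⟨hne, {H}, Finset.singleton_subset_iff.2 hH, Finset.inf_singleton⟩

theorem poset_mono (h : B ⊆ A) : poset B ⊆ poset A :=
  Finset.filter_subset_filter _ (Finset.image_subset_image (Finset.powerset_mono.2 h))

theorem inf_mem_poset (hY : Y ∈ poset A) (hZ : Z ∈ poset A) (hne : Y ⊓ Z ≠ ⊥) :
    Y ⊓ Z ∈ poset A := by
  obtain ⟨-, S, hS, rfl⟩ := mem_poset_iff_exists.1 hY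
  obtain ⟨-, T, hT, rfl⟩ := mem_poset_iff_exists.1 hZ
  exact mem_poset_iff_exists.2 ⟨hne, S ∪ T, Finset.union_subset hS hT, Finset.inf_union⟩

/-- The smallest flat of `A` containing `Y` (for nonempty `Y`). It describes the meet of `L(A)`, and
the flats are its nonempty fixed points. -/
noncomputable def flatClosure (A : Finset (AffineSubspace K V)) (Y : AffineSubspace K V) :
    AffineSubspace K V :=
  (A.filter (Y ≤ ·)).inf id

theorem le_flatClosure_iff : W ≤ flatClosure A Y ↔ ∀ H ∈ A, Y ≤ H → W ≤ H := by
  simp only [flatClosure, Finset.le_inf_iff, Finset.mem_filter, and_imp, id]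

theorem le_flatClosure : Y ≤ flatClosure A Y :=
  le_flatClosure_iff.2 fun _ _ h => h

theorem flatClosure_le (hH : H ∈ A) (hY : Y ≤ H) : flatClosure A Y ≤ H :=
  le_flatClosure_iff.1 le_rfl H hH hY

theorem mem_flatClosure_iff {x : V} : x ∈ flatClosure A Y ↔ ∀ H ∈ A, Y ≤ H → x ∈ H := by
  simp only [flatClosure, Finset.inf_id_eq_sInf, AffineSubspace.mem_sInf_iff, Finset.mem_coe,
    Finset.mem_filter, and_imp]

theorem flatClosure_mem_poset (hY : Y ≠ ⊥) : flatClosure A Y ∈ poset A :=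
  mem_poset_iff_exists.2
    ⟨ne_bot_of_le_ne_bot hY le_flatClosure, _, Finset.filter_subset _ _, rfl⟩

theorem flatClosure_le_of_mem_poset (hZ : Z ∈ poset A) (hYZ : Y ≤ Z) : flatClosure A Y ≤ Z := by
  obtain ⟨-, S, hS, rfl⟩ := mem_poset_iff_exists.1 hZ
  exact Finset.le_inf fun H hH => flatClosure_le (hS hH) (hYZ.trans (Finset.inf_le hH))

theorem mem_poset_iff_flatClosure_eq : Y ∈ poset A ↔ Y ≠ ⊥ ∧ flatClosure A Y = Y :=
  ⟨fun hY => ⟨ne_bot_of_mem_poset hY,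
      le_antisymm (flatClosure_le_of_mem_poset hY le_rfl) le_flatClosure⟩,
    fun ⟨hne, hY⟩ => hY ▸ flatClosure_mem_poset hne⟩

theorem exists_le_of_mem_poset_of_ne_top (hY : Y ∈ poset A) (hne : Y ≠ ⊤) :
    ∃ H ∈ A, Y ≤ H := by
  by_contra! hcon
  refine hne (top_le_iff.1 ?_)
  rw [← (mem_poset_iff_flatClosure_eq.1 hY).2]
  exact le_flatClosure_iff.2 fun H hH hYH => absurd hYH (hcon H hH)

theorem lmeet_eq_flatClosure_sup (hY : Y ≠ ⊥) : lmeet A Y Z = flatClosure A (Y ⊔ Z) := by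
  refine le_antisymm (sInf_le ⟨flatClosure_mem_poset (ne_bot_of_le_ne_bot hY le_sup_left),
    le_sup_left.trans le_flatClosure, le_sup_right.trans le_flatClosure⟩) (le_sInf ?_)
  rintro W ⟨hW, hYW, hZW⟩
  exact flatClosure_le_of_mem_poset hW (sup_le hYW hZW)

theorem isIdeal_meetCompl : IsIdeal A (meetCompl A I) := by
  refine ⟨Finset.filter_subset _ _, fun Y hY Z hZ hYZ => Finset.mem_filter.2 ⟨hZ, fun X hX => ?_⟩⟩
  rw [← top_le_iff, ← (Finset.mem_filter.1 hY).2 X hX]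
  exact sInf_le_sInf fun W hW => ⟨hW.1, hW.2.1, hYZ.trans hW.2.2⟩

/-- Transversality of the two ideals combines the join axiom and the rank axiom. -/
theorem isModularIdeal_iff [FiniteDimensional K V] :
    IsModularIdeal A I ↔ IsIdeal A I ∧
      (∀ X ∈ poset A, X ≠ ⊤ → ∃ Z ∈ poset A, Z ≠ ⊤ ∧
        (I ∩ principal A X = principal A Z ∨ meetCompl A I ∩ principal A X = principal A Z)) ∧
      ∀ Y ∈ I, ∀ Z ∈ meetCompl A I, Y.direction ⊔ Z.direction = ⊤ := by
  have hpair : ∀ f : Fin 2 → AffineSubspace K V, Finset.univ.inf f = f 0 ⊓ f 1 := fun f => by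
    simp [Fin.univ_succ]
  have hfamily : ∀ P : AffineSubspace K V → AffineSubspace K V → Prop,
      (∀ f : Fin 2 → AffineSubspace K V, f 0 ∈ I ∧ f 1 ∈ meetCompl A I → P (f 0) (f 1)) ↔
        ∀ Y ∈ I, ∀ Z ∈ meetCompl A I, P Y Z := fun P =>
    ⟨fun h Y hY Z hZ => h ![Y, Z] ⟨hY, hZ⟩, fun h f hf => h (f 0) hf.1 (f 1) hf.2⟩
  simp only [IsModularIdeal, IsIdealDecomposition, Fin.forall_fin_two, Fin.exists_fin_two,
    Fin.sum_univ_two, Matrix.cons_val_zero, Matrix.cons_val_one, isIdeal_meetCompl, and_true,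
    and_or_left, exists_or, hpair]
  refine and_congr_right fun hI => and_congr_right fun _ => ?_
  rw [hfamily fun Y Z => Y ⊓ Z ≠ ⊥, hfamily fun Y Z => rk (Y ⊓ Z) = rk Y + rk Z]
  simp only [← forall₂_and]
  exact forall₂_congr fun Y hY => forall₂_congr fun Z hZ => inf_ne_bot_and_rk_inf_eq_iff
    (ne_bot_of_mem_poset (hI.1 hY)) (ne_bot_of_mem_poset (isIdeal_meetCompl.1 hZ))

/-- The intersection of the directions of the members of `B`. The bijection of the theorem matches
`commonDirection B × 0` with `B`. -/
def commonDirection (B : Finset (AffineSubspace K V)) : Submodule K V :=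
  ⨅ H ∈ B, H.direction

theorem mem_commonDirection {v : V} : v ∈ commonDirection B ↔ ∀ H ∈ B, v ∈ H.direction := by
  simp only [commonDirection, Submodule.mem_iInf]

theorem commonDirection_le (hH : H ∈ B) : commonDirection B ≤ H.direction :=
  iInf₂_le H hH

theorem commonDirection_anti (h : B ⊆ A) : commonDirection A ≤ commonDirection B :=
  biInf_mono h

theorem direction_inf_id (hne : B.inf id ≠ ⊥) : (B.inf id).direction = commonDirection B := by
  obtain ⟨p, hp⟩ := exists_mem_of_ne_bot hne
  rw [Finset.inf_id_eq_sInf] at hp ⊢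
  rw [AffineSubspace.direction_sInf_of_mem_sInf _ p hp]
  rfl

theorem direction_flatClosure (hY : Y ≠ ⊥) :
    (flatClosure A Y).direction = commonDirection (A.filter (Y ≤ ·)) :=
  direction_inf_id (ne_bot_of_le_ne_bot hY le_flatClosure)

/-- The hyperplanes of `A` that are parallel to `D`, in the sense that their direction contains `D`.
Equivalently, these are the hyperplanes whose cone contains `D × 0`. -/
noncomputable def parallelTo (A : Finset (AffineSubspace K V)) (D : Submodule K V) :
    Finset (AffineSubspace K V) :=
  A.filter fun H => D ≤ H.direction

theorem mem_parallelTo : H ∈ parallelTo A D ↔ H ∈ A ∧ D ≤ H.direction :=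
  Finset.mem_filter

theorem parallelTo_subset : parallelTo A D ⊆ A :=
  Finset.filter_subset _ _

theorem le_commonDirection_parallelTo : D ≤ commonDirection (parallelTo A D) :=
  le_iInf₂ fun _ hH => (mem_parallelTo.1 hH).2

theorem subset_parallelTo_commonDirection (hB : B ⊆ A) : B ⊆ parallelTo A (commonDirection B) :=
  fun _ hH => mem_parallelTo.2 ⟨hB hH, commonDirection_le hH⟩

theorem commonDirection_le_direction (hY : Y ∈ poset A) : commonDirection A ≤ Y.direction := by
  obtain ⟨hne, S, hS, rfl⟩ := mem_poset_iff_exists.1 hY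
  rw [direction_inf_id hne]
  exact commonDirection_anti hS

theorem mem_poset_parallelTo : Y ∈ poset (parallelTo A D) ↔ Y ∈ poset A ∧ D ≤ Y.direction := by
  refine ⟨fun hY => ⟨poset_mono parallelTo_subset hY,
    le_commonDirection_parallelTo.trans (commonDirection_le_direction hY)⟩, ?_⟩
  rintro ⟨hY, hD⟩
  obtain ⟨hne, S, hS, rfl⟩ := mem_poset_iff_exists.1 hY
  refine mem_poset_iff_exists.2 ⟨hne, S, fun H hH => mem_parallelTo.2 ⟨hS hH, hD.trans ?_⟩, rfl⟩
  exact AffineSubspace.direction_le (Finset.inf_le hH)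

theorem commonDirection_parallelTo_direction (hY : Y ∈ poset A) :
    commonDirection (parallelTo A Y.direction) = Y.direction :=
  le_antisymm (commonDirection_le_direction (mem_poset_parallelTo.2 ⟨hY, le_rfl⟩))
    le_commonDirection_parallelTo

end Flats

section Arrangement

variable {K V : Type*} [Field K] [AddCommGroup V] [Module K V]
  {A B : Finset (AffineSubspace K V)} {H H' Y : AffineSubspace K V}

theorem IsArrangement.mono (hA : IsArrangement A) (hB : B ⊆ A) : IsArrangement B :=
  fun H hH => hA H (hB hH)

theorem IsArrangement.ne_bot (hA : IsArrangement A) (hH : H ∈ A) : H ≠ ⊥ :=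
  (hA H hH).1

theorem IsArrangement.isCoatom_direction (hA : IsArrangement A) (hH : H ∈ A) :
    IsCoatom H.direction := by
  have hcodim := (hA H hH).2
  have : FiniteDimensional K V := Module.finite_of_finrank_pos (by omega)
  rw [← isSimpleModule_iff_isCoatom, isSimpleModule_iff_finrank_eq_one]
  have := H.direction.finrank_quotient_add_finrank
  omega

theorem IsArrangement.ne_top (hA : IsArrangement A) (hH : H ∈ A) : H ≠ ⊤ := by
  rintro rfl
  exact (hA.isCoatom_direction hH).1 (AffineSubspace.direction_top _ _ _)

theorem IsArrangement.eq_of_le (hA : IsArrangement A) (hH : H ∈ A) (hH' : H' ∈ A)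
    (hle : H ≤ H') : H = H' := by
  refine AffineSubspace.eq_of_direction_eq_of_nonempty_of_le ?_
    ((AffineSubspace.nonempty_iff_ne_bot H).2 (hA.ne_bot hH)) hle
  exact (((hA.isCoatom_direction hH).le_iff.1 (AffineSubspace.direction_le hle)).resolve_left
    (hA.isCoatom_direction hH').1).symm

theorem IsArrangement.inf_ne_bot (hA : IsArrangement A) (hH : H ∈ A) (hY : Y ≠ ⊥)
    (hdir : ¬ Y.direction ≤ H.direction) : Y ⊓ H ≠ ⊥ := by
  have htop : Y.direction ⊔ H.direction = ⊤ :=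
    (hA.isCoatom_direction hH).2 _ (right_lt_sup.2 hdir)
  obtain ⟨p, hp⟩ := AffineSubspace.inter_nonempty_of_nonempty_of_sup_direction_eq_top
    ((AffineSubspace.nonempty_iff_ne_bot Y).2 hY)
    ((AffineSubspace.nonempty_iff_ne_bot H).2 (hA.ne_bot hH)) htop
  exact ne_bot_of_mem hp

/-- `Y ⊓ H` has codimension at most one in `Y`, so no affine subspace lies strictly between. -/
theorem IsArrangement.inf_le_of_inf_le (hA : IsArrangement A) (hH : H ∈ A) (hne : Y ⊓ H ≠ ⊥)
    (hle : Y ⊓ H ≤ H') (hY : ¬ Y ≤ H') : Y ⊓ H' ≤ H := by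
  obtain ⟨p, hpY, hpH⟩ := exists_mem_of_ne_bot hne
  have hpH' : p ∈ H' := hle ⟨hpY, hpH⟩
  by_cases hYH : Y ≤ H
  · exact inf_le_left.trans hYH
  rw [le_iff_direction_le_of_mem hpY hpH] at hYH
  rw [le_iff_direction_le_of_mem hpY hpH'] at hY
  have hdir : Y.direction ⊓ H.direction ≤ H'.direction :=
    AffineSubspace.direction_inf_of_mem hpY hpH ▸ AffineSubspace.direction_le hle
  have hpYH' : p ∈ Y ⊓ H' := ⟨hpY, hpH'⟩
  rw [le_iff_direction_le_of_mem hpYH' hpH, AffineSubspace.direction_inf_of_mem hpY hpH']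
  have hcov : Y.direction ⊓ H.direction ⋖ Y.direction := by
    apply inf_covBy_of_covBy_sup_right
    rw [(hA.isCoatom_direction hH).2 _ (right_lt_sup.2 hYH)]
    exact (hA.isCoatom_direction hH).covBy_top
  have heq : Y.direction ⊓ H'.direction = Y.direction ⊓ H.direction :=
    (hcov.eq_or_eq (le_inf inf_le_left hdir) inf_le_left).resolve_right fun h =>
      hY (inf_eq_left.1 h)
  exact heq.trans_le inf_le_right

theorem IsArrangement.exists_mem_poset_direction_eq (hA : IsArrangement A) :
    ∃ Z ∈ poset A, Z.direction = commonDirection A := by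
  obtain ⟨Z, hZ, hmin⟩ := (poset A).exists_minimal ⟨⊤, top_mem_poset⟩
  refine ⟨Z, hZ, le_antisymm (le_iInf₂ fun H hH => ?_) (commonDirection_le_direction hZ)⟩
  by_contra hdir
  have hne : Z ⊓ H ≠ ⊥ := hA.inf_ne_bot hH (ne_bot_of_mem_poset hZ) hdir
  have hmem := inf_mem_poset hZ (mem_poset_of_mem hH (hA.ne_bot hH)) hne
  exact hdir (AffineSubspace.direction_le (le_inf_iff.1 (hmin hmem inf_le_left)).2)

/-- Take `W` minimal among the flats that contain `Y` and lie in no hyperplane of `B`. -/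
theorem IsArrangement.exists_inf_flatClosure_eq (hA : IsArrangement A) (hB : B ⊆ A)
    (hY : Y ∈ poset A) :
    ∃ W ∈ poset A, (∀ H ∈ B, ¬ W ≤ H) ∧ W ⊓ flatClosure B Y = Y := by
  obtain ⟨W, hWmem, hWmin⟩ :=
    ((poset A).filter fun W => Y ≤ W ∧ ∀ H ∈ B, ¬ W ≤ H).exists_minimal
      ⟨⊤, Finset.mem_filter.2 ⟨top_mem_poset, le_top, fun H hH hle =>
        hA.ne_top (hB hH) (top_le_iff.1 hle)⟩⟩
  obtain ⟨hW, hYW, hWB⟩ := Finset.mem_filter.1 hWmem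
  refine ⟨W, hW, hWB, le_antisymm ?_ (le_inf hYW le_flatClosure)⟩
  suffices h : W ⊓ flatClosure B Y ≤ flatClosure A Y from
    h.trans_eq (mem_poset_iff_flatClosure_eq.1 hY).2
  refine le_flatClosure_iff.2 fun H hH hYH => ?_
  by_cases hWH : W ≤ H
  · exact inf_le_left.trans hWH
  have hYWH : Y ≤ W ⊓ H := le_inf hYW hYH
  have hne : W ⊓ H ≠ ⊥ := ne_bot_of_le_ne_bot (ne_bot_of_mem_poset hY) hYWH
  have hmem : W ⊓ H ∈ poset A := inf_mem_poset hW (mem_poset_of_mem hH (hA.ne_bot hH)) hne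
  obtain ⟨H', hH', hle⟩ : ∃ H' ∈ B, W ⊓ H ≤ H' := by
    by_contra! hWHB
    have hW_le := hWmin (Finset.mem_filter.2 ⟨hmem, hYWH, hWHB⟩) inf_le_left
    exact hWH (hW_le.trans inf_le_right)
  exact (inf_le_inf_left W (flatClosure_le hH' (hYWH.trans hle))).trans
    (hA.inf_le_of_inf_le hH hne hle (hWB H' hH'))

theorem mem_meetCompl_poset_iff (hA : IsArrangement A) (hB : B ⊆ A) (hI : IsIdeal A (poset B)) :
    Y ∈ meetCompl A (poset B) ↔ Y ∈ poset A ∧ ∀ H ∈ B, ¬ Y ≤ H := by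
  refine Finset.mem_filter.trans (and_congr_right fun _ =>
    ⟨fun h H hH hYH => ?_, fun h Z hZ => ?_⟩)
  · have hmeet := h H (mem_poset_of_mem hH (hA.ne_bot (hB hH)))
    rw [lmeet_eq_flatClosure_sup (hA.ne_bot (hB hH)), ← top_le_iff] at hmeet
    exact hA.ne_top (hB hH)
      (top_le_iff.1 (hmeet.trans (flatClosure_le (hB hH) (sup_le le_rfl hYH))))
  · have hZne := ne_bot_of_mem_poset hZ
    rw [lmeet_eq_flatClosure_sup hZne]
    by_contra hne
    have hmem : flatClosure A (Z ⊔ Y) ∈ poset B :=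
      hI.2 Z hZ _ (flatClosure_mem_poset (ne_bot_of_le_ne_bot hZne le_sup_left))
        (le_sup_left.trans le_flatClosure)
    obtain ⟨H, hH, hle⟩ := exists_le_of_mem_poset_of_ne_top hmem hne
    exact h H hH ((le_sup_right.trans le_flatClosure).trans hle)

end Arrangement

section ModularDirection

variable {K V : Type*} [Field K] [AddCommGroup V] [Module K V]
  {A B : Finset (AffineSubspace K V)} {D : Submodule K V} {Y : AffineSubspace K V}

/-- `D` is a modular direction of `A` if `Y + D` is a flat of `A` for every flat `Y`: the condition
on `D` that both modularity of `D × 0` in `L(cA)` and modularity of `parallelTo A D` amount to. -/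
def IsModularDirection (A : Finset (AffineSubspace K V)) (D : Submodule K V) : Prop :=
  ∀ Y ∈ poset A, thicken Y D ∈ poset A

theorem isIdeal_poset_parallelTo : IsIdeal A (poset (parallelTo A D)) := by
  refine ⟨poset_mono parallelTo_subset, fun Y hY Z hZ hYZ => ?_⟩
  exact mem_poset_parallelTo.2
    ⟨hZ, (mem_poset_parallelTo.1 hY).2.trans (AffineSubspace.direction_le hYZ)⟩

theorem poset_parallelTo_inter_principal (hY : Y ≠ ⊥) :
    poset (parallelTo A D) ∩ principal A Y = principal A (thicken Y D) := by
  ext Z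
  simp only [principal, Finset.mem_inter, Finset.mem_filter, mem_poset_parallelTo,
    thicken_le_iff hY]
  tauto

theorem IsModularDirection.mem_meetCompl_iff (hA : IsArrangement A)
    (hD : IsModularDirection A D) :
    Y ∈ meetCompl A (poset (parallelTo A D)) ↔ Y ∈ poset A ∧ thicken Y D = ⊤ := by
  rw [mem_meetCompl_poset_iff hA parallelTo_subset isIdeal_poset_parallelTo]
  refine and_congr_right fun hY => ⟨fun h => ?_, fun h H hH hYH => ?_⟩
  · by_contra hne
    obtain ⟨H, hH, hle⟩ := exists_le_of_mem_poset_of_ne_top (hD Y hY) hne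
    obtain ⟨hYH, hDH⟩ := (thicken_le_iff (ne_bot_of_mem_poset hY)).1 hle
    exact h H (mem_parallelTo.2 ⟨hH, hDH⟩) hYH
  · obtain ⟨hHA, hDH⟩ := mem_parallelTo.1 hH
    have hle := (thicken_le_iff (ne_bot_of_mem_poset hY)).2 ⟨hYH, hDH⟩
    rw [h, top_le_iff] at hle
    exact hA.ne_top hHA hle

variable [FiniteDimensional K V]

theorem IsModularDirection.isModularSub_parallelTo (hA : IsArrangement A)
    (hD : IsModularDirection A D) : IsModularSub A (parallelTo A D) := by
  refine ⟨parallelTo_subset, isModularIdeal_iff.2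
    ⟨isIdeal_poset_parallelTo, fun Y hY hne => ?_, fun Z hZ Y hY => ?_⟩⟩
  · by_cases htop : thicken Y D = ⊤
    · refine ⟨Y, hY, hne, Or.inr (Finset.inter_eq_right.2 fun Z hZ => ?_)⟩
      obtain ⟨hZA, hYZ⟩ := Finset.mem_filter.1 hZ
      exact isIdeal_meetCompl.2 Y ((hD.mem_meetCompl_iff hA).2 ⟨hY, htop⟩) Z hZA hYZ
    · exact ⟨thicken Y D, hD Y hY, htop,
        Or.inl (poset_parallelTo_inter_principal (ne_bot_of_mem_poset hY))⟩
  · obtain ⟨hYA, htop⟩ := (hD.mem_meetCompl_iff hA).1 hY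
    rw [thicken_eq_top_iff (ne_bot_of_mem_poset hYA)] at htop
    rw [← top_le_iff, ← htop]
    exact sup_le le_sup_right ((mem_poset_parallelTo.1 hZ).2.trans le_sup_left)

theorem IsModularSub.thicken_commonDirection_eq_top (hA : IsArrangement A)
    (hB : IsModularSub A B) (hY : Y ∈ poset A) (hYB : ∀ H ∈ B, ¬ Y ≤ H) :
    thicken Y (commonDirection B) = ⊤ := by
  obtain ⟨hBA, hmod⟩ := hB
  obtain ⟨hI, -, htrans⟩ := isModularIdeal_iff.1 hmod
  obtain ⟨Z, hZ, hdir⟩ := (hA.mono hBA).exists_mem_poset_direction_eq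
  rw [thicken_eq_top_iff (ne_bot_of_mem_poset hY), ← hdir, sup_comm]
  exact htrans Z hZ Y ((mem_meetCompl_poset_iff hA hBA hI).2 ⟨hY, hYB⟩)

theorem IsModularSub.isModularDirection_commonDirection (hA : IsArrangement A)
    (hB : IsModularSub A B) : IsModularDirection A (commonDirection B) := by
  intro Y hY
  have hclosure : flatClosure B Y ∈ poset B := flatClosure_mem_poset (ne_bot_of_mem_poset hY)
  obtain ⟨W, hW, hWB, hWY⟩ := hA.exists_inf_flatClosure_eq hB.1 hY
  rw [← hWY, thicken_inf_of_le_direction (commonDirection_le_direction hclosure),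
    hB.thicken_commonDirection_eq_top hA hW hWB, top_inf_eq]
  exact poset_mono hB.1 hclosure

theorem IsModularSub.parallelTo_commonDirection (hA : IsArrangement A) (hB : IsModularSub A B) :
    parallelTo A (commonDirection B) = B := by
  refine Finset.Subset.antisymm (fun H hH => ?_) (subset_parallelTo_commonDirection hB.1)
  obtain ⟨hHA, hdir⟩ := mem_parallelTo.1 hH
  by_contra hHB
  have htop : thicken H (commonDirection B) = ⊤ :=
    hB.thicken_commonDirection_eq_top hA (mem_poset_of_mem hHA (hA.ne_bot hHA)) fun H' hH' hle =>
      hHB (hA.eq_of_le hHA (hB.1 hH') hle ▸ hH')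
  rw [thicken_eq_top_iff (hA.ne_bot hHA), sup_eq_left.2 hdir] at htop
  exact (hA.isCoatom_direction hHA).1 htop

end ModularDirection

section CentralArrangement

variable {K V : Type*} [Field K] [AddCommGroup V] [Module K V] [FiniteDimensional K V]
  {C : Finset (AffineSubspace K V)} {Z : AffineSubspace K V}

theorem IsCentral.isModularElement_iff (hC : IsCentral C) :
    IsModularElement C Z ↔ Z ∈ poset C ∧ ∀ X ∈ poset C, Z ⊔ X ∈ poset C := by
  obtain ⟨p, hp⟩ := exists_mem_of_ne_bot hC
  have hpX : ∀ X ∈ poset C, p ∈ X := fun X hX => by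
    obtain ⟨-, S, hS, rfl⟩ := mem_poset_iff_exists.1 hX
    exact (Finset.inf_mono hS : C.inf id ≤ S.inf id) hp
  refine and_congr_right fun hZ => forall₂_congr fun X hX => ?_
  have hne : Z ⊔ X ≠ ⊥ := ne_bot_of_le_ne_bot (ne_bot_of_mem_poset hZ) le_sup_left
  rw [rk_add_rk_eq_rk_sup_add_rk_inf (hpX Z hZ) (hpX X hX), Nat.add_right_cancel_iff,
    lmeet_eq_flatClosure_sup (ne_bot_of_mem_poset hZ), mem_poset_iff_flatClosure_eq]
  exact ⟨fun hrk => ⟨hne, (eq_of_le_of_rk_eq hne le_flatClosure hrk).symm⟩,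
    fun h => congrArg rk h.2.symm⟩

end CentralArrangement

section Cone

variable {K V : Type*} [Field K] [AddCommGroup V] [Module K V]
  {H Y : AffineSubspace K V} {X : AffineSubspace K (V × K)} {D E : Submodule K V} {p v : V}
  {x : V × K}

theorem mem_addHyp : x ∈ addHyp K V ↔ x.2 = 0 := Iff.rfl

theorem prodMk_one_mem_cone (hv : v ∈ H) : (v, (1 : K)) ∈ cone H :=
  Submodule.subset_span ⟨v, hv, rfl⟩

theorem zero_mem_cone : (0 : V × K) ∈ cone H :=
  Submodule.zero_mem _

theorem mem_cone_iff (hp : p ∈ H) : x ∈ cone H ↔ x.1 - x.2 • p ∈ H.direction := by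
  constructor
  · intro hx
    induction hx using Submodule.span_induction with
    | mem x hx =>
      obtain ⟨q, hq, rfl⟩ := hx
      simpa using AffineSubspace.vsub_mem_direction hq hp
    | zero => simp
    | add x y _ _ hx hy =>
      convert add_mem hx hy using 1
      simp only [Prod.fst_add, Prod.snd_add]
      module
    | smul c x _ hx =>
      convert H.direction.smul_mem c hx using 1
      simp only [Prod.smul_fst, Prod.smul_snd, smul_eq_mul]
      module
  · intro hx
    have hdecomp : x = ((x.1 - x.2 • p) +ᵥ p, (1 : K)) + (x.2 - 1) • (p, (1 : K)) := by
      ext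
      · simp only [vadd_eq_add, Prod.fst_add, Prod.smul_fst]
        module
      · simp
    rw [hdecomp]
    exact Submodule.add_mem _
      (prodMk_one_mem_cone (AffineSubspace.vadd_mem_of_mem_direction hx hp))
      (Submodule.smul_mem _ _ (prodMk_one_mem_cone hp))

theorem mem_cone_bot : x ∈ cone (⊥ : AffineSubspace K V) ↔ x = 0 := by
  simp [cone]

theorem prodMk_one_mem_cone_iff : (v, (1 : K)) ∈ cone H ↔ v ∈ H := by
  obtain rfl | hH := eq_or_ne H ⊥
  · simp [mem_cone_bot, AffineSubspace.notMem_bot]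
  · obtain ⟨p, hp⟩ := exists_mem_of_ne_bot hH
    rw [mem_cone_iff hp, one_smul]
    exact AffineSubspace.vsub_right_mem_direction_iff_mem hp v

theorem prodMk_zero_mem_cone_iff : (v, (0 : K)) ∈ cone H ↔ v ∈ H.direction := by
  obtain rfl | hH := eq_or_ne H ⊥
  · simp [mem_cone_bot]
  · obtain ⟨p, hp⟩ := exists_mem_of_ne_bot hH
    rw [mem_cone_iff hp, zero_smul, sub_zero]

theorem cone_le_cone_iff : cone Y ≤ cone H ↔ Y ≤ H :=
  ⟨fun h _ hv => prodMk_one_mem_cone_iff.1 (h (prodMk_one_mem_cone hv)),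
    fun h => Submodule.span_mono (Set.image_mono h)⟩

theorem not_cone_le_addHyp (hY : Y ≠ ⊥) : ¬ cone Y ≤ addHyp K V := fun h => by
  obtain ⟨p, hp⟩ := exists_mem_of_ne_bot hY
  exact one_ne_zero (mem_addHyp.1 (h (prodMk_one_mem_cone hp)))

/-- The subspace `D × 0` of the additional hyperplane `V × 0`; these are all the linear subspaces of
`V × K` that are not cones over nonempty affine subspaces. -/
def atInfinity (D : Submodule K V) : AffineSubspace K (V × K) :=
  (D.prod ⊥).toAffineSubspace

theorem mem_atInfinity : x ∈ atInfinity D ↔ x.1 ∈ D ∧ x.2 = 0 := Iff.rfl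

theorem zero_mem_atInfinity : (0 : V × K) ∈ atInfinity D :=
  mem_atInfinity.2 ⟨D.zero_mem, rfl⟩

theorem atInfinity_injective :
    Function.Injective (atInfinity : Submodule K V → AffineSubspace K (V × K)) := fun D E h => by
  ext v
  simpa [mem_atInfinity] using SetLike.ext_iff.1 h (v, 0)

theorem atInfinity_le_addHyp : atInfinity D ≤ addHyp K V :=
  fun _ hx => (mem_atInfinity.1 hx).2

theorem atInfinity_le_cone_iff : atInfinity D ≤ cone H ↔ D ≤ H.direction := by
  refine ⟨fun h v hv => prodMk_zero_mem_cone_iff.1 (h (mem_atInfinity.2 ⟨hv, rfl⟩)), ?_⟩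
  rintro h ⟨v, t⟩ hx
  obtain ⟨hv, rfl⟩ := mem_atInfinity.1 hx
  exact prodMk_zero_mem_cone_iff.2 (h hv)

theorem eq_atInfinity_or_eq_cone (h0 : 0 ∈ X) :
    (∃ D : Submodule K V, X = atInfinity D) ∨ ∃ Y : AffineSubspace K V, Y ≠ ⊥ ∧ X = cone Y := by
  lift X to Submodule K (V × K) using h0
  by_cases hle : X.toAffineSubspace ≤ addHyp K V
  · refine Or.inl ⟨X.comap (LinearMap.inl K V K), ?_⟩
    ext ⟨v, t⟩
    refine ⟨fun hx => ?_, ?_⟩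
    · obtain rfl : t = 0 := hle hx
      exact ⟨hx, rfl⟩
    · rintro ⟨hv, rfl : t = 0⟩
      exact hv
  · obtain ⟨⟨v, t⟩, hvt, ht : t ≠ 0⟩ := SetLike.not_le_iff_exists.1 hle
    have hp : (t⁻¹ • v, (1 : K)) ∈ X := by
      simpa [ht] using X.smul_mem t⁻¹ hvt
    refine Or.inr ⟨AffineSubspace.mk' (t⁻¹ • v) (X.comap (LinearMap.inl K V K)),
      ne_bot_of_mem (AffineSubspace.self_mem_mk' _ _), ?_⟩
    ext x
    have hdecomp : x = (x.1 - x.2 • t⁻¹ • v, (0 : K)) + x.2 • (t⁻¹ • v, (1 : K)) := by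
      ext <;> simp
    rw [mem_cone_iff (AffineSubspace.self_mem_mk' _ _), AffineSubspace.direction_mk',
      Submodule.mem_comap, LinearMap.inl_apply, Submodule.mem_toAffineSubspace]
    nth_rewrite 1 [hdecomp]
    exact X.add_mem_iff_left (X.smul_mem _ hp)

theorem atInfinity_sup_atInfinity : atInfinity D ⊔ atInfinity E = atInfinity (D ⊔ E) := by
  rw [atInfinity, atInfinity, ← toAffineSubspace_sup, Submodule.prod_sup_prod, sup_idem, atInfinity]

theorem atInfinity_sup_cone (hY : Y ≠ ⊥) : atInfinity D ⊔ cone Y = cone (thicken Y D) := by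
  obtain ⟨p, hp⟩ := exists_mem_of_ne_bot hY
  refine le_antisymm (sup_le ?_ (cone_le_cone_iff.2 le_thicken)) fun x hx => ?_
  · rw [atInfinity_le_cone_iff, direction_thicken hY]
    exact le_sup_right
  · rw [mem_cone_iff (le_thicken hp), direction_thicken hY, Submodule.mem_sup] at hx
    obtain ⟨y, hy, d, hd, hsum⟩ := hx
    rw [atInfinity, cone, ← toAffineSubspace_sup]
    refine Submodule.mem_sup.2 ⟨(d, 0), ⟨hd, rfl⟩, x - (d, 0), (mem_cone_iff hp).2 ?_, by simp⟩
    have hy_eq : (x - (d, 0)).1 - (x - (d, 0)).2 • p = y := by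
      rw [Prod.fst_sub, Prod.snd_sub, sub_zero, sub_right_comm, ← hsum, add_sub_cancel_right]
    exact hy_eq ▸ hy

end Cone

section ConeArrangement

variable {K V : Type*} [Field K] [AddCommGroup V] [Module K V]
  {A : Finset (AffineSubspace K V)} {Y : AffineSubspace K V} {X : AffineSubspace K (V × K)}
  {D : Submodule K V}

theorem forall_mem_coneArr {P : AffineSubspace K (V × K) → Prop} :
    (∀ H ∈ coneArr A, P H) ↔ P (addHyp K V) ∧ ∀ H ∈ A, P (cone H) := by
  simp only [coneArr, Finset.forall_mem_insert, Finset.forall_mem_image]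

theorem zero_mem_inf_coneArr : (0 : V × K) ∈ (coneArr A).inf id := by
  simp only [Finset.inf_id_eq_sInf, AffineSubspace.mem_sInf_iff, Finset.mem_coe,
    forall_mem_coneArr, zero_mem_cone, mem_addHyp, Prod.snd_zero, implies_true, and_self]

theorem isCentral_coneArr : IsCentral (coneArr A) :=
  ne_bot_of_mem zero_mem_inf_coneArr

theorem eq_atInfinity_or_eq_cone_of_mem_poset (hX : X ∈ poset (coneArr A)) :
    (∃ D : Submodule K V, X = atInfinity D) ∨ ∃ Y : AffineSubspace K V, Y ≠ ⊥ ∧ X = cone Y := by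
  obtain ⟨-, S, hS, rfl⟩ := mem_poset_iff_exists.1 hX
  exact eq_atInfinity_or_eq_cone
    ((Finset.inf_mono hS : (coneArr A).inf id ≤ S.inf id) zero_mem_inf_coneArr)

theorem flatClosure_coneArr_cone (hY : Y ≠ ⊥) :
    flatClosure (coneArr A) (cone Y) = cone (flatClosure A Y) := by
  obtain ⟨p, hp⟩ := exists_mem_of_ne_bot hY
  ext x
  simp only [mem_flatClosure_iff, forall_mem_coneArr, not_cone_le_addHyp hY, cone_le_cone_iff,
    mem_cone_iff (le_flatClosure hp), direction_flatClosure hY, false_imp_iff, true_and,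
    mem_commonDirection, Finset.mem_filter, and_imp]
  exact forall₂_congr fun H _ => forall_congr' fun hYH => mem_cone_iff (hYH hp)

theorem flatClosure_coneArr_atInfinity :
    flatClosure (coneArr A) (atInfinity D) = atInfinity (commonDirection (parallelTo A D)) := by
  ext ⟨v, t⟩
  simp only [mem_flatClosure_iff, forall_mem_coneArr, atInfinity_le_addHyp, atInfinity_le_cone_iff,
    mem_addHyp, mem_atInfinity, mem_commonDirection, mem_parallelTo, true_imp_iff, and_imp]
  rw [and_comm, and_congr_left_iff]
  rintro rfl
  simp only [prodMk_zero_mem_cone_iff]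

theorem cone_mem_poset_coneArr_iff (hY : Y ≠ ⊥) : cone Y ∈ poset (coneArr A) ↔ Y ∈ poset A := by
  have hcone : cone Y ≠ ⊥ := ne_bot_of_mem zero_mem_cone
  simp only [mem_poset_iff_flatClosure_eq, hY, hcone, flatClosure_coneArr_cone hY, ne_eq,
    not_false_eq_true, true_and, le_antisymm_iff, cone_le_cone_iff]

theorem atInfinity_mem_poset_coneArr_iff :
    atInfinity D ∈ poset (coneArr A) ↔ commonDirection (parallelTo A D) = D := by
  rw [mem_poset_iff_flatClosure_eq, flatClosure_coneArr_atInfinity, atInfinity_injective.eq_iff,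
    and_iff_right (ne_bot_of_mem zero_mem_atInfinity)]

theorem atInfinity_direction_mem_poset_coneArr (hY : Y ∈ poset A) :
    atInfinity Y.direction ∈ poset (coneArr A) :=
  atInfinity_mem_poset_coneArr_iff.2 (commonDirection_parallelTo_direction hY)

theorem exists_direction_eq_of_atInfinity_mem_poset (hA : IsArrangement A)
    (hD : atInfinity D ∈ poset (coneArr A)) : ∃ Y ∈ poset A, Y.direction = D := by
  obtain ⟨Y, hY, hdir⟩ :=
    (hA.mono (parallelTo_subset (D := D))).exists_mem_poset_direction_eq
  exact ⟨Y, poset_mono parallelTo_subset hY,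
    hdir.trans (atInfinity_mem_poset_coneArr_iff.1 hD)⟩

theorem isModularDirection_iff_forall_sup_mem_poset (hA : IsArrangement A) :
    IsModularDirection A D ↔
      ∀ X ∈ poset (coneArr A), atInfinity D ⊔ X ∈ poset (coneArr A) := by
  have hsup_cone : ∀ Y, Y ≠ ⊥ →
      (atInfinity D ⊔ cone Y ∈ poset (coneArr A) ↔ thicken Y D ∈ poset A) := fun Y hY => by
    rw [atInfinity_sup_cone hY, cone_mem_poset_coneArr_iff (thicken_ne_bot hY)]
  refine ⟨fun hD X hX => ?_, fun h Y hY => ?_⟩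
  · obtain ⟨E, rfl⟩ | ⟨Y, hY, rfl⟩ := eq_atInfinity_or_eq_cone_of_mem_poset hX
    · obtain ⟨Y, hY, rfl⟩ := exists_direction_eq_of_atInfinity_mem_poset hA hX
      rw [atInfinity_sup_atInfinity, sup_comm, ← direction_thicken (ne_bot_of_mem_poset hY)]
      exact atInfinity_direction_mem_poset_coneArr (hD Y hY)
    · exact (hsup_cone Y hY).2 (hD Y ((cone_mem_poset_coneArr_iff hY).1 hX))
  · have hne := ne_bot_of_mem_poset hY
    exact (hsup_cone Y hne).1 (h _ ((cone_mem_poset_coneArr_iff hne).2 hY))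

theorem isModularElement_atInfinity_iff [FiniteDimensional K V] (hA : IsArrangement A) :
    IsModularElement (coneArr A) (atInfinity D) ↔
      commonDirection (parallelTo A D) = D ∧ IsModularDirection A D := by
  rw [isCentral_coneArr.isModularElement_iff, atInfinity_mem_poset_coneArr_iff,
    isModularDirection_iff_forall_sup_mem_poset hA]

theorem filter_atInfinity_le_cone :
    (A.filter fun H => atInfinity D ≤ cone H) = parallelTo A D :=
  Finset.filter_congr fun _ _ => atInfinity_le_cone_iff

theorem modularElement_le_addHyp_iff [FiniteDimensional K V] (hA : IsArrangement A) :
    X ∈ poset (coneArr A) ∧ X ≤ addHyp K V ∧ IsModularElement (coneArr A) X ↔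
      ∃ D : Submodule K V, commonDirection (parallelTo A D) = D ∧ IsModularDirection A D ∧
        atInfinity D = X := by
  constructor
  · rintro ⟨hX, hle, hmod⟩
    obtain ⟨D, rfl⟩ | ⟨Y, hY, rfl⟩ := eq_atInfinity_or_eq_cone_of_mem_poset hX
    · obtain ⟨hclosed, hD⟩ := (isModularElement_atInfinity_iff hA).1 hmod
      exact ⟨D, hclosed, hD, rfl⟩
    · exact absurd hle (not_cone_le_addHyp hY)
  · rintro ⟨D, hclosed, hD, rfl⟩
    have hmod := (isModularElement_atInfinity_iff hA).2 ⟨hclosed, hD⟩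
    exact ⟨hmod.1, atInfinity_le_addHyp, hmod⟩

end ConeArrangement

/-- **Theorem.** The map `X ↦ {H ∈ A : cH ≤ X}` (with `cH ≤ X` in the
reverse-inclusion order, i.e. `X ⊆ cH`) is a bijection between the modular elements
`X` of `L(cA)` with `K ≤ X` (i.e. `X ⊆ K`, `X` located in the additional hyperplane)
and the modular subarrangements of `A`. -/
theorem cone_modularElements_biject_modularSubs
    {K V : Type*} [Field K] [AddCommGroup V] [Module K V] [FiniteDimensional K V]
    (A : Finset (AffineSubspace K V)) (hA : IsArrangement A) :
    Set.BijOn (fun X : AffineSubspace K (V × K) => A.filter fun H => X ≤ cone H)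
      {X : AffineSubspace K (V × K) |
        X ∈ poset (coneArr A) ∧ X ≤ addHyp K V ∧ IsModularElement (coneArr A) X}
      {B : Finset (AffineSubspace K V) | IsModularSub A B} := by
  simp only [modularElement_le_addHyp_iff hA]
  refine Set.InvOn.bijOn (f' := fun B => atInfinity (commonDirection B)) ⟨?leftInv, ?rightInv⟩
    ?mapsTo ?mapsTo_inv
  case leftInv =>
    rintro _ ⟨D, hclosed, -, rfl⟩
    simp only [filter_atInfinity_le_cone, hclosed]
  case rightInv =>
    intro B hB
    simp only [filter_atInfinity_le_cone, hB.parallelTo_commonDirection hA]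
  case mapsTo =>
    rintro _ ⟨D, -, hD, rfl⟩
    simp only [filter_atInfinity_le_cone]
    exact hD.isModularSub_parallelTo hA
  case mapsTo_inv =>
    intro B hB
    exact ⟨commonDirection B, by rw [hB.parallelTo_commonDirection hA],
      hB.isModularDirection_commonDirection hA, rfl⟩

end HypArr
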